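/- arXiv:gr-qc/9909053 — 2 statements merged into one kernel-verified Lean document; each statement's English description precedes it below -/
import Mathlib

section
/- Let c(n,p) be defined by the recursion c(0,0) = 1, c(0,p) = 0 for p ≥ 1, c(n,p) = c(n−1, p−1) + c(n−1, p+1) (with c(n−1,−1) := 0). Then for every p ∈ ℕ and every λ ∈ ℝ, the exponential generating function of the p-th column is ∑_{n=0}^{∞} c(n,p) λⁿ / n! = (p+1) · ∑_{k=0}^{∞} λ^{2k+p} / ( k! · (k+p+1)! ), both series converging absolutely. (The right-hand side equals ((p+1)/λ) I_{p+1}(2λ), where I_ν is the modified Bessel function of the first kind.) -/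
/-- SU(2) tensor-power multiplicities (see the recursion in the paper):
`c 0 0 = 1`, `c 0 (p+1) = 0`, `c (n+1) 0 = c n 1`, `c (n+1) (p+1) = c n p + c n (p+2)`. -/
def cMult : ℕ → ℕ → ℕ
  | 0, 0 => 1
  | 0, _ + 1 => 0
  | n + 1, 0 => cMult n 1
  | n + 1, p + 1 => cMult n p + cMult n (p + 2)

/-!
`cMult n p` counts the nonnegative lattice paths with `n` steps `±1` from height `0` to height `p`.
A path with `k` down steps has `n = 2 * k + p`, and by the ballot formula there are
`(p + 1) * n! / (k! * (k + p + 1)!)` of them.  So `1 / n!` cancels the numerator, and the nonzero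
terms of the column series are, one by one, the terms of the Bessel series.
-/

open scoped Nat

theorem exists_eq_two_mul_add_of_cMult_ne_zero {n p : ℕ} (h : cMult n p ≠ 0) :
    ∃ k, n = 2 * k + p := by
  fun_induction cMult n p with
  | case1 => exact ⟨0, rfl⟩
  | case2 => exact absurd rfl h
  | case3 n ih =>
    obtain ⟨k, rfl⟩ := ih h
    exact ⟨k + 1, by omega⟩
  | case4 n p ih_up ih_down =>
    by_cases h_up : cMult n p = 0
    · obtain ⟨k, rfl⟩ := ih_down (by simpa only [h_up, Nat.zero_add] using h)
      exact ⟨k + 1, by omega⟩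
    · obtain ⟨k, rfl⟩ := ih_up h_up
      exact ⟨k, by omega⟩

theorem cMult_eq_zero_of_lt {n p : ℕ} (h : n < p) : cMult n p = 0 := by
  by_contra hne
  obtain ⟨k, rfl⟩ := exists_eq_two_mul_add_of_cMult_ne_zero hne
  omega

theorem cMult_self (p : ℕ) : cMult p p = 1 := by
  induction p with
  | zero => rfl
  | succ p ih => rw [cMult, ih, cMult_eq_zero_of_lt (by omega)]

theorem cMult_mul_factorial_mul_factorial (k p : ℕ) :
    cMult (2 * k + p) p * (k ! * (k + p + 1)!) = (p + 1) * (2 * k + p)! := by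
  -- Removing the last step of a path replaces `(k, p)` by `(k, p - 1)` or `(k - 1, p + 1)`,
  -- and both are smaller in the lexicographic order.
  induction k generalizing p with
  | zero => simp [cMult_self, Nat.factorial_succ]
  | succ k ih_k =>
    induction p with
    | zero =>
      have hdown : cMult (2 * k + 1) 1 * (k ! * (k + 2)!) = 2 * (2 * k + 1)! := ih_k 1
      calc cMult (2 * k + 2) 0 * ((k + 1)! * (k + 2)!)
          = (k + 1) * (cMult (2 * k + 1) 1 * (k ! * (k + 2)!)) := by
            rw [cMult, Nat.factorial_succ k]; ring
        _ = (0 + 1) * (2 * k + 2)! := by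
            rw [hdown, Nat.factorial_succ (2 * k + 1)]; ring
    | succ p ih_p =>
      have hup : cMult (2 * k + p + 2) p * ((k + 1)! * (k + p + 2)!) =
          (p + 1) * (2 * k + p + 2)! := by
        rw [show 2 * k + p + 2 = 2 * (k + 1) + p by ring, show k + p + 2 = k + 1 + p + 1 by ring,
          ih_p]
      have hdown : cMult (2 * k + p + 2) (p + 2) * (k ! * (k + p + 3)!) =
          (p + 3) * (2 * k + p + 2)! := ih_k (p + 2)
      rw [show 2 * (k + 1) + (p + 1) = 2 * k + p + 3 by ring,
        show k + 1 + (p + 1) + 1 = k + p + 3 by ring]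
      calc cMult (2 * k + p + 3) (p + 1) * ((k + 1)! * (k + p + 3)!)
          = (cMult (2 * k + p + 2) p + cMult (2 * k + p + 2) (p + 2)) *
              ((k + 1)! * (k + p + 3)!) := by rw [cMult]
        _ = (k + p + 3) * (cMult (2 * k + p + 2) p * ((k + 1)! * (k + p + 2)!)) +
              (k + 1) * (cMult (2 * k + p + 2) (p + 2) * (k ! * (k + p + 3)!)) := by
            rw [Nat.factorial_succ k, Nat.factorial_succ (k + p + 2)]; ring
        _ = (p + 1 + 1) * (2 * k + p + 3)! := by
            rw [hup, hdown, Nat.factorial_succ (2 * k + p + 2)]; ring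

theorem cMult_div_factorial {K : Type*} [Field K] [CharZero K] (k p : ℕ) :
    (cMult (2 * k + p) p / (2 * k + p)! : K) = (p + 1) * (k ! * (k + p + 1)! : K)⁻¹ := by
  rw [← div_eq_mul_inv, div_eq_div_iff (mod_cast (2 * k + p).factorial_ne_zero)
    (mod_cast mul_ne_zero k.factorial_ne_zero (k + p + 1).factorial_ne_zero)]
  exact_mod_cast cMult_mul_factorial_mul_factorial k p

section NormedAlgebra

variable {A : Type*} [NormedRing A] [NormedAlgebra ℝ A]

theorem summable_norm_inv_factorial_mul_factorial_smul_pow (x : A) (m ν : ℕ) :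
    Summable fun k : ℕ => ‖(k ! * (k + ν)! : ℝ)⁻¹ • x ^ (2 * k + m)‖ := by
  have hexp : Summable fun k : ℕ => ‖(k ! : ℝ)⁻¹ • (x ^ 2) ^ k‖ * ‖x ^ m‖ :=
    (NormedSpace.norm_expSeries_summable' (𝕂 := ℝ) (x ^ 2)).mul_right _
  refine hexp.of_nonneg_of_le (fun _ => norm_nonneg _) fun k => ?_
  have hfactor : (k ! * (k + ν)! : ℝ)⁻¹ • x ^ (2 * k + m) =
      ((k + ν)! : ℝ)⁻¹ • ((k ! : ℝ)⁻¹ • (x ^ 2) ^ k * x ^ m) := by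
    rw [mul_inv_rev, mul_smul, pow_add, pow_mul, smul_mul_assoc]
  have hle_one : ‖((k + ν)! : ℝ)⁻¹‖ ≤ 1 := by
    rw [norm_inv, Real.norm_natCast]
    exact inv_le_one_of_one_le₀ (mod_cast (k + ν).factorial_pos)
  calc ‖(k ! * (k + ν)! : ℝ)⁻¹ • x ^ (2 * k + m)‖
      = ‖((k + ν)! : ℝ)⁻¹‖ * ‖(k ! : ℝ)⁻¹ • (x ^ 2) ^ k * x ^ m‖ := by rw [hfactor, norm_smul]
    _ ≤ ‖(k ! : ℝ)⁻¹ • (x ^ 2) ^ k * x ^ m‖ := mul_le_of_le_one_left (norm_nonneg _) hle_one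
    _ ≤ ‖(k ! : ℝ)⁻¹ • (x ^ 2) ^ k‖ * ‖x ^ m‖ := norm_mul_le _ _

theorem stmt_9_general [CompleteSpace A] (p : ℕ) (x : A) :
    Summable (fun n : ℕ => ‖(cMult n p / n ! : ℝ) • x ^ n‖) ∧
    Summable (fun k : ℕ => ‖(k ! * (k + p + 1)! : ℝ)⁻¹ • x ^ (2 * k + p)‖) ∧
    HasSum (fun n : ℕ => (cMult n p / n ! : ℝ) • x ^ n)
      ((p + 1 : ℝ) • ∑' k : ℕ, (k ! * (k + p + 1)! : ℝ)⁻¹ • x ^ (2 * k + p)) := by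
  have hbessel : Summable fun k : ℕ => ‖(k ! * (k + p + 1)! : ℝ)⁻¹ • x ^ (2 * k + p)‖ :=
    summable_norm_inv_factorial_mul_factorial_smul_pow x p (p + 1)
  have hinj : Function.Injective fun k : ℕ => 2 * k + p := fun i j h => by grind
  have hzero : ∀ n ∉ Set.range fun k : ℕ => 2 * k + p, (cMult n p / n ! : ℝ) • x ^ n = 0 := by
    intro n hn
    have hc : cMult n p = 0 := by
      contrapose! hn
      exact (exists_eq_two_mul_add_of_cMult_ne_zero hn).imp fun _ => Eq.symm
    rw [hc, Nat.cast_zero, zero_div, zero_smul]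
  have hterm (k : ℕ) : (cMult (2 * k + p) p / (2 * k + p)! : ℝ) • x ^ (2 * k + p) =
      (p + 1 : ℝ) • (k ! * (k + p + 1)! : ℝ)⁻¹ • x ^ (2 * k + p) := by
    rw [cMult_div_factorial, mul_smul]
  refine ⟨(hinj.summable_iff fun n hn => by rw [hzero n hn, norm_zero]).mp ?_, hbessel,
    (hinj.hasSum_iff hzero).mp ?_⟩
  · simp only [Function.comp_def, hterm, norm_smul (p + 1 : ℝ)]
    exact hbessel.mul_left _
  · simp only [Function.comp_def, hterm]
    exact hbessel.of_norm.hasSum.const_smul _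

end NormedAlgebra

/-- Exponential generating function of the `p`-th column of the multiplicities:
`∑ₙ c(n,p) λⁿ/n! = (p+1) ∑ₖ λ^{2k+p}/(k!(k+p+1)!)`, both series converging
absolutely (the right-hand side equals `((p+1)/λ) I_{p+1}(2λ)`). -/
theorem stmt_9 :
    ∀ (p : ℕ) (lam : ℝ),
      Summable (fun n : ℕ => |(cMult n p : ℝ) * lam ^ n / (n.factorial : ℝ)|) ∧
      Summable (fun k : ℕ =>
        |lam ^ (2 * k + p) / ((k.factorial : ℝ) * ((k + p + 1).factorial : ℝ))|) ∧
      ∑' n : ℕ, (cMult n p : ℝ) * lam ^ n / (n.factorial : ℝ) =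
        (p + 1) *
          ∑' k : ℕ, lam ^ (2 * k + p) / ((k.factorial : ℝ) * ((k + p + 1).factorial : ℝ)) := by
  intro p lam
  have h := stmt_9_general p lam
  simp only [smul_eq_mul, div_mul_eq_mul_div, inv_mul_eq_div, Real.norm_eq_abs] at h
  exact ⟨h.1, h.2.1, h.2.2.tsum_eq⟩
end

section
/- For every λ ∈ ℝ and p ∈ ℕ set B_p(λ) = ∑_{k=0}^{∞} λ^{2k+p} / ( k! · (k+p)! ), and let U_p denote the Chebyshev polynomials of the second kind. Then for all real λ and all real x, exp(2λx) = ∑_{p=0}^{∞} ( B_p(λ) − B_{p+2}(λ) ) · U_p(x), the series converging absolutely. (This is the expansion of the quasi-coherent weave function exp(λ(Tr g − 2)), g ∈ SU(2) with Tr g = 2x, into SU(2) characters with Bessel-function coefficients I_p(2λ) − I_{p+2}(2λ).) -/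
/-- `besselB p lam = ∑ₖ lam^{2k+p}/(k!(k+p)!)`, i.e. `I_p(2·lam)` where `I_p` is the
modified Bessel function of the first kind of order `p`. -/
noncomputable def besselB (p : ℕ) (lam : ℝ) : ℝ :=
  ∑' k : ℕ, lam ^ (2 * k + p) / ((k.factorial : ℝ) * ((k + p).factorial : ℝ))

/-!
Let `S` be the shift on two-sided sequences. The sequence `u n = U_n(a)`, `n ∈ ℤ`, satisfies
`(S + S⁻¹) u = 2a u`, so `exp(2λa) u = exp(λS) exp(λS⁻¹) u`. At index `0` the right-hand side is
the double series of `λ^(m+n)/(m! n!) u(m - n)`, and its terms with `m - n = d` add up to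
`B_|d|(λ) u(d)`. Hence `exp(2λa) = ∑_{d ∈ ℤ} B_|d|(λ) U_d(a)`, and the reflection
`U_{-d-2} = -U_d` folds this series onto `d ≥ 0`.
-/

open Finset Polynomial
open scoped Nat

/-- A two-sided sequence satisfying the three-term recurrence of the Chebyshev polynomials, with
`c` playing the role of `2x`. -/
def IsChebyshevSeq {R : Type*} [Add R] [Mul R] (c : R) (u : ℤ → R) : Prop :=
  ∀ n, u (n + 1) + u (n - 1) = c * u n

theorem isChebyshevSeq_aeval_U {R A : Type*} [CommRing R] [Ring A] [Algebra R A] (a : A) :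
    IsChebyshevSeq (2 * a) fun n => aeval a (Chebyshev.U R n) := by
  intro n
  simp [Chebyshev.U_add_one, map_ofNat]

namespace IsChebyshevSeq

theorem comp_neg {R : Type*} [AddCommMagma R] [Mul R] {c : R} {u : ℤ → R}
    (hu : IsChebyshevSeq c u) : IsChebyshevSeq c fun n => u (-n) := by
  intro n
  simp only [neg_add', neg_sub', sub_neg_eq_add]
  rw [add_comm, hu]

theorem sum_antidiagonal_choose_nsmul {R : Type*} [Semiring R] {c : R} {u : ℤ → R}
    (hu : IsChebyshevSeq c u) (N : ℕ) (j : ℤ) :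
    ∑ ij ∈ antidiagonal N, N.choose ij.1 • u (j + (ij.1 - ij.2)) = c ^ N * u j := by
  induction N generalizing j with
  | zero => simp
  | succ N ih =>
    have lower : ∑ ij ∈ antidiagonal N, N.choose ij.1 • u (j + (ij.1 - (ij.2 + 1 : ℕ))) =
        c ^ N * u (j - 1) := by
      rw [← ih]
      refine sum_congr rfl fun ij _ => ?_
      congr 2
      push_cast
      ring
    have upper : ∑ ij ∈ antidiagonal N, N.choose ij.2 • u (j + ((ij.1 + 1 : ℕ) - ij.2)) =
        c ^ N * u (j + 1) := by
      rw [← ih]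
      refine sum_congr rfl fun ij hij => ?_
      rw [Nat.choose_symm_of_eq_add (mem_antidiagonal.mp hij).symm]
      congr 2
      push_cast
      ring
    rw [sum_antidiagonal_choose_succ_nsmul (fun m n : ℕ => u (j + (m - n))), lower, upper,
      ← mul_add, add_comm, hu, pow_succ, mul_assoc]

section Growth

variable {A : Type*} [SeminormedRing A] {c : A} {u : ℤ → A}

theorem norm_natCast_le (hu : IsChebyshevSeq c u) {M : ℝ} (h0 : ‖u 0‖ ≤ M)
    (h1 : ‖u 1‖ ≤ M * (‖c‖ + 1)) (n : ℕ) : ‖u n‖ ≤ M * (‖c‖ + 1) ^ n := by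
  induction n using Nat.twoStepInduction with
  | zero => simpa using h0
  | one => simpa using h1
  | more n ihn ihn1 =>
    have hM : 0 ≤ M := (norm_nonneg _).trans h0
    have rec_eq : u (n + 2 : ℕ) = c * u (n + 1 : ℕ) - u n := by
      have h := hu (n + 1)
      rw [add_sub_cancel_right, add_assoc] at h
      exact_mod_cast eq_sub_of_add_eq h
    calc ‖u (n + 2 : ℕ)‖ ≤ ‖c‖ * ‖u (n + 1 : ℕ)‖ + ‖u n‖ := by
          rw [rec_eq]
          exact (norm_sub_le _ _).trans (by gcongr; exact norm_mul_le _ _)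
      _ ≤ ‖c‖ * (M * (‖c‖ + 1) ^ (n + 1)) + M * (‖c‖ + 1) ^ (n + 1) := by
          gcongr
          refine ihn.trans ?_
          gcongr
          · linarith [norm_nonneg c]
          · exact n.le_succ
      _ = M * (‖c‖ + 1) ^ (n + 2) := by ring

theorem norm_le (hu : IsChebyshevSeq c u) (n : ℤ) :
    ‖u n‖ ≤ (‖u 0‖ + ‖u 1‖) * (‖c‖ + 1) ^ n.natAbs := by
  have h0 := norm_nonneg (u 0)
  have h1 := norm_nonneg (u 1)
  have hc := norm_nonneg c
  have bound_zero : ‖u 0‖ ≤ ‖u 0‖ + ‖u 1‖ := by linarith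
  have bound_one : ‖u 1‖ ≤ (‖u 0‖ + ‖u 1‖) * (‖c‖ + 1) := by nlinarith
  have bound_neg_one : ‖u (-1)‖ ≤ (‖u 0‖ + ‖u 1‖) * (‖c‖ + 1) := by
    have rec_eq : u (-1) = c * u 0 - u 1 := by simpa using eq_sub_of_add_eq' (hu 0)
    calc ‖u (-1)‖ ≤ ‖c‖ * ‖u 0‖ + ‖u 1‖ := by
          rw [rec_eq]
          exact (norm_sub_le _ _).trans (by gcongr; exact norm_mul_le _ _)
      _ ≤ (‖u 0‖ + ‖u 1‖) * (‖c‖ + 1) := by nlinarith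
  obtain ⟨k, rfl | rfl⟩ := n.eq_nat_or_neg
  · simpa using hu.norm_natCast_le bound_zero bound_one k
  · simpa using hu.comp_neg.norm_natCast_le (by simp) bound_neg_one k

end Growth

end IsChebyshevSeq

theorem hasSum_sum_antidiagonal {E : Type*} [AddCommMonoid E] [TopologicalSpace E]
    [ContinuousAdd E] [RegularSpace E] {f : ℕ × ℕ → E} {s : E} (hf : HasSum f s) :
    HasSum (fun n => ∑ ij ∈ antidiagonal n, f ij) s := by
  refine (HasAntidiagonal.sigmaAntidiagonalEquivProd.hasSum_iff.mpr hf).sigma fun n => ?_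
  exact (antidiagonal n).hasSum f

theorem summable_norm_of_prod_fiberwise {β γ E : Type*} [SeminormedAddCommGroup E]
    {f : β × γ → E} {g : β → E} (hf : Summable fun q => ‖f q‖)
    (hg : ∀ b, HasSum (fun c => f (b, c)) (g b)) : Summable fun b => ‖g b‖ := by
  refine .of_nonneg_of_le (fun b => norm_nonneg _) (fun b => ?_) hf.prod
  exact (hg b).norm_le_of_bounded (hf.prod_factor b).hasSum fun c => le_rfl

theorem hasSum_int_fold_neg_one {E : Type*} [AddCommGroup E] [TopologicalSpace E]
    [IsTopologicalAddGroup E] {f : ℤ → E} {s : E} (hf : HasSum f s) (h : f (-1) = 0) :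
    HasSum (fun n : ℕ => f n + f (-n - 2)) s := by
  have fold_shift : HasSum (fun n : ℕ => f (n - 1) + f (-n - 1)) s := by
    simpa [h] using ((Equiv.subRight (1 : ℤ)).hasSum_iff.mpr hf).nat_add_neg
  have drop_zero := (hasSum_nat_add_iff' 1).mpr fold_shift
  simp only [range_one, sum_singleton, Nat.cast_zero, zero_sub, neg_zero, h, add_zero,
    sub_zero] at drop_zero
  convert drop_zero using 4 <;> push_cast <;> ring

/-- The difference and the minimum as coordinates on `ℕ × ℕ`: the pair with difference `d` and
minimum `k` is `(k + d⁺, k + d⁻)`. It collects the terms of a double series along diagonals. -/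
def diffMinEquiv : ℤ × ℕ ≃ ℕ × ℕ where
  toFun q := (q.2 + q.1.toNat, q.2 + (-q.1).toNat)
  invFun q := (q.1 - q.2, min q.1 q.2)
  left_inv q := by ext <;> dsimp only <;> lia
  right_inv q := by ext <;> dsimp only <;> lia

theorem summable_pow_div_factorial_mul (x y : ℝ) :
    Summable fun q : ℕ × ℕ => x ^ q.1 / q.1 ! * (y ^ q.2 / q.2 !) :=
  summable_mul_of_summable_norm (Real.summable_pow_div_factorial x).norm
    (Real.summable_pow_div_factorial y).norm

theorem hasSum_besselB (p : ℕ) (lam : ℝ) :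
    HasSum (fun k => lam ^ (k + p) / (k + p)! * (lam ^ k / k !)) (besselB p lam) := by
  have diagonal_injective : Function.Injective fun k : ℕ => (k + p, k) :=
    fun _ _ h => congrArg Prod.snd h
  have term_eq (k : ℕ) : lam ^ (2 * k + p) / (k ! * (k + p)!) =
      lam ^ (k + p) / (k + p)! * (lam ^ k / k !) := by
    ring
  simp only [besselB, term_eq]
  exact ((summable_pow_div_factorial_mul lam lam).comp_injective diagonal_injective).hasSum

/-- The general term of the expansion of `exp(λS) exp(λS⁻¹) u` at index `0`, where `S` is the
shift on two-sided sequences. -/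
noncomputable def shiftExpTerm {E : Type*} [SMul ℝ E] (lam : ℝ) (u : ℤ → E) (q : ℕ × ℕ) : E :=
  (lam ^ q.1 / q.1 ! * (lam ^ q.2 / q.2 !)) • u (q.1 - q.2)

theorem hasSum_shiftExpTerm_diffMinEquiv {E : Type*} [AddCommMonoid E] [TopologicalSpace E]
    [Module ℝ E] [ContinuousSMul ℝ E] (lam : ℝ) (u : ℤ → E) (d : ℤ) :
    HasSum (fun k => shiftExpTerm lam u (diffMinEquiv (d, k))) (besselB d.natAbs lam • u d) := by
  convert (hasSum_besselB d.natAbs lam).smul_const (u d) using 2 with k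
  obtain ⟨p, rfl | rfl⟩ := d.eq_nat_or_neg
  · simp [shiftExpTerm, diffMinEquiv]
  · simp [shiftExpTerm, diffMinEquiv, mul_comm]

namespace IsChebyshevSeq

theorem sum_antidiagonal_shiftExpTerm {A : Type*} [Semiring A] [Algebra ℝ A] {c : A} {u : ℤ → A}
    (hu : IsChebyshevSeq c u) (lam : ℝ) (N : ℕ) :
    ∑ ij ∈ antidiagonal N, shiftExpTerm lam u ij = ((N ! : ℝ)⁻¹ • (lam • c) ^ N) * u 0 := by
  have binomial_coeff (ij : ℕ × ℕ) (hij : ij ∈ antidiagonal N) :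
      lam ^ ij.1 / ij.1 ! * (lam ^ ij.2 / ij.2 !) = (N ! : ℝ)⁻¹ * lam ^ N * N.choose ij.1 := by
    obtain rfl := mem_antidiagonal.mp hij
    rw [Nat.cast_add_choose]
    field_simp
    ring
  calc ∑ ij ∈ antidiagonal N, shiftExpTerm lam u ij
      = ((N ! : ℝ)⁻¹ * lam ^ N) •
          ∑ ij ∈ antidiagonal N, N.choose ij.1 • u (0 + (ij.1 - ij.2)) := by
        rw [smul_sum]
        refine sum_congr rfl fun ij hij => ?_
        rw [shiftExpTerm, binomial_coeff ij hij, mul_smul, Nat.cast_smul_eq_nsmul, zero_add]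
    _ = ((N ! : ℝ)⁻¹ • (lam • c) ^ N) * u 0 := by
        rw [hu.sum_antidiagonal_choose_nsmul, _root_.smul_pow, smul_smul, smul_mul_assoc]

section AbsoluteConvergence

variable {A : Type*} [SeminormedRing A] [NormedAlgebra ℝ A] {c : A} {u : ℤ → A}

theorem summable_norm_shiftExpTerm (hu : IsChebyshevSeq c u) (lam : ℝ) :
    Summable fun q => ‖shiftExpTerm lam u q‖ := by
  let r := |lam| * (‖c‖ + 1)
  refine .of_nonneg_of_le (fun q => norm_nonneg _) (fun q => ?_)
    ((summable_pow_div_factorial_mul r r).mul_left (‖u 0‖ + ‖u 1‖))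
  have growth : ‖u (q.1 - q.2)‖ ≤ (‖u 0‖ + ‖u 1‖) * (‖c‖ + 1) ^ (q.1 + q.2) := by
    refine (hu.norm_le _).trans ?_
    gcongr
    · linarith [norm_nonneg c]
    · lia
  calc ‖shiftExpTerm lam u q‖
      = |lam| ^ q.1 / q.1 ! * (|lam| ^ q.2 / q.2 !) * ‖u (q.1 - q.2)‖ := by
        simp [shiftExpTerm, norm_smul]
    _ ≤ |lam| ^ q.1 / q.1 ! * (|lam| ^ q.2 / q.2 !) *
          ((‖u 0‖ + ‖u 1‖) * (‖c‖ + 1) ^ (q.1 + q.2)) := by gcongr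
    _ = (‖u 0‖ + ‖u 1‖) * (r ^ q.1 / q.1 ! * (r ^ q.2 / q.2 !)) := by
        simp only [r, mul_pow]
        ring

theorem summable_norm_besselB_smul (hu : IsChebyshevSeq c u) (lam : ℝ) :
    Summable fun d : ℤ => ‖besselB d.natAbs lam • u d‖ :=
  summable_norm_of_prod_fiberwise
    (diffMinEquiv.summable_iff.mpr (hu.summable_norm_shiftExpTerm lam))
    (hasSum_shiftExpTerm_diffMinEquiv lam u)

end AbsoluteConvergence

section Sum

variable {A : Type*} [NormedRing A] [NormedAlgebra ℝ A] [CompleteSpace A] {c : A} {u : ℤ → A}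

theorem hasSum_shiftExpTerm (hu : IsChebyshevSeq c u) (lam : ℝ) :
    HasSum (shiftExpTerm lam u) (NormedSpace.exp (lam • c) * u 0) := by
  have double_series := (hu.summable_norm_shiftExpTerm lam).of_norm.hasSum
  have exp_series := (NormedSpace.exp_series_hasSum_exp' (𝕂 := ℝ) (lam • c)).mul_right (u 0)
  simp only [← hu.sum_antidiagonal_shiftExpTerm] at exp_series
  exact (hasSum_sum_antidiagonal double_series).unique exp_series ▸ double_series

theorem hasSum_besselB_smul (hu : IsChebyshevSeq c u) (lam : ℝ) :
    HasSum (fun d : ℤ => besselB d.natAbs lam • u d) (NormedSpace.exp (lam • c) * u 0) :=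
  (diffMinEquiv.hasSum_iff.mpr (hu.hasSum_shiftExpTerm lam)).prod_fiberwise
    (hasSum_shiftExpTerm_diffMinEquiv lam u)

end Sum

end IsChebyshevSeq

theorem besselB_smul_aeval_U_add_reflection {A : Type*} [Ring A] [Algebra ℝ A] (lam : ℝ) (a : A)
    (p : ℕ) :
    besselB (p : ℤ).natAbs lam • aeval a (Chebyshev.U ℝ p) +
        besselB (-p - 2 : ℤ).natAbs lam • aeval a (Chebyshev.U ℝ (-p - 2)) =
      (besselB p lam - besselB (p + 2) lam) • aeval a (Chebyshev.U ℝ p) := by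
  rw [Chebyshev.U_neg_sub_two, map_neg, smul_neg, ← sub_eq_add_neg, ← sub_smul, Int.natAbs_natCast,
    show (-p - 2 : ℤ).natAbs = p + 2 by lia]

theorem stmt_12_general {A : Type*} [NormedRing A] [NormedAlgebra ℝ A] [CompleteSpace A]
    (lam : ℝ) (a : A) :
    Summable (fun p : ℕ =>
      ‖(besselB p lam - besselB (p + 2) lam) • aeval a (Chebyshev.U ℝ p)‖) ∧
    NormedSpace.exp ((2 * lam) • a) =
      ∑' p : ℕ, (besselB p lam - besselB (p + 2) lam) • aeval a (Chebyshev.U ℝ p) := by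
  have hU := isChebyshevSeq_aeval_U (R := ℝ) a
  have abs_int := hU.summable_norm_besselB_smul lam
  have sum_nat := hasSum_int_fold_neg_one (hU.hasSum_besselB_smul lam) (by simp)
  simp only [besselB_smul_aeval_U_add_reflection, Chebyshev.U_zero, map_one, mul_one] at sum_nat
  have exponent_eq : lam • (2 * a) = (2 * lam) • a := by
    rw [two_mul, smul_add, two_mul, add_smul]
  refine ⟨?_, exponent_eq ▸ sum_nat.tsum_eq.symm⟩
  have neg_injective : Function.Injective fun p : ℕ => (-p - 2 : ℤ) := fun _ _ h => by
    dsimp only at h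
    lia
  refine .of_nonneg_of_le (fun p => norm_nonneg _) (fun p => ?_)
    ((abs_int.comp_injective Nat.cast_injective).add (abs_int.comp_injective neg_injective))
  rw [← besselB_smul_aeval_U_add_reflection]
  exact norm_add_le _ _

/-- Character expansion of the quasi-coherent weave function:
`exp(2λx) = ∑ₚ (I_p(2λ) − I_{p+2}(2λ)) U_p(x)` with `U_p` the Chebyshev polynomials of
the second kind, the series converging absolutely. -/
theorem stmt_12 :
    ∀ lam x : ℝ,
      Summable (fun p : ℕ =>
        |(besselB p lam - besselB (p + 2) lam) *
          (Polynomial.Chebyshev.U ℝ (p : ℤ)).eval x|) ∧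
      Real.exp (2 * lam * x) =
        ∑' p : ℕ,
          (besselB p lam - besselB (p + 2) lam) *
            (Polynomial.Chebyshev.U ℝ (p : ℤ)).eval x := by
  intro lam x
  simpa [Real.exp_eq_exp_ℝ] using stmt_12_general lam x
end
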